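/- Fix n ≥ 3. On E = (ℝ²)^{ℤ/nℤ}, let A(z) = ½·∑ᵢ ω(zᵢ, zᵢ₊₁) with ω(u,v) = u₁v₂ − u₂v₁, let vᵢ be the vector field whose i-th component at z is zᵢ₊₁ − zᵢ₋₁ and whose other components are 0, and let [X,Y](z) = DY(z)(X(z)) − DX(z)(Y(z)) denote the Lie bracket of vector fields. Let z ∈ E satisfy det(zᵢ₊₁ − zᵢ₋₁, zᵢ₊₂ − zᵢ) ≠ 0 for all i (indices mod n). Then the real linear span of the 2n vectors {vᵢ(z) : i ∈ ℤ/nℤ} ∪ {[vᵢ, vᵢ₊₁](z) : i ∈ ℤ/nℤ} equals the kernel of the linear functional dA_z (the derivative of A at z), which is a hyperplane of dimension 2n − 1 in E. -/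

import Mathlib

/-- The standard area form `det(u,v) = u₁v₂ − u₂v₁` on `ℝ²`. -/
def det2 (u v : ℝ × ℝ) : ℝ := u.1 * v.2 - u.2 * v.1

/-- The algebraic area `A(z) = ½ ∑ᵢ ω(zᵢ, zᵢ₊₁)` of a planar `n`-gon (indices mod `n`). -/
noncomputable def polyArea {n : ℕ} [NeZero n] (z : ZMod n → ℝ × ℝ) : ℝ :=
  (1 / 2) * ∑ i : ZMod n, det2 (z i) (z (i + 1))

/-- The vector field `vᵢ`: its `i`-th component at `z` is `zᵢ₊₁ − zᵢ₋₁`, other components `0`. -/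
noncomputable def vfield {n : ℕ} [NeZero n] (i : ZMod n) (z : ZMod n → ℝ × ℝ) :
    ZMod n → ℝ × ℝ :=
  Pi.single i (z (i + 1) - z (i - 1))

/-- Lie bracket of vector fields on `(ℝ²)^{ℤ/nℤ}`: `[X,Y](z) = DY(z)(X(z)) − DX(z)(Y(z))`. -/
noncomputable def bracket {n : ℕ} [NeZero n]
    (X Y : (ZMod n → ℝ × ℝ) → (ZMod n → ℝ × ℝ)) (z : ZMod n → ℝ × ℝ) :
    ZMod n → ℝ × ℝ :=
  fderiv ℝ Y z (X z) - fderiv ℝ X z (Y z)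

/-- The linear version of `vfield`. -/
noncomputable def vfieldL {n : ℕ} [NeZero n] (i : ZMod n) :
    (ZMod n → ℝ × ℝ) →L[ℝ] (ZMod n → ℝ × ℝ) :=
  (ContinuousLinearMap.single ℝ (fun _ : ZMod n => ℝ × ℝ) i).comp
    (ContinuousLinearMap.proj (R := ℝ) (φ := fun _ : ZMod n => ℝ × ℝ) (i + 1)
      - ContinuousLinearMap.proj (R := ℝ) (φ := fun _ : ZMod n => ℝ × ℝ) (i - 1))

lemma vfield_eq {n : ℕ} [NeZero n] (i : ZMod n) : vfield i = ⇑(vfieldL i) := by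
  funext z
  simp [vfield, vfieldL, Pi.single_sub]

lemma fderiv_vfield {n : ℕ} [NeZero n] (i : ZMod n) (z w : ZMod n → ℝ × ℝ) :
    fderiv ℝ (vfield i) z w = vfield i w := by
  rw [vfield_eq, ContinuousLinearMap.fderiv]

lemma bracket_eq {n : ℕ} [NeZero n] (hn : 3 ≤ n) (i : ZMod n) (z : ZMod n → ℝ × ℝ) :
    bracket (vfield i) (vfield (i + 1)) z =
      - Pi.single (i + 1) (z (i + 1) - z (i - 1)) - Pi.single i (z (i + 2) - z i) := by
  have h2 : (2 : ZMod n) ≠ 0 := by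
    intro h
    have h' : ((2 : ℕ) : ZMod n) = 0 := by exact_mod_cast h
    rw [ZMod.natCast_eq_zero_iff] at h'
    have := Nat.le_of_dvd (by norm_num) h'
    omega
  have e1 : i + 1 + 1 = i + 2 := by ring
  have e2 : i + 1 - 1 = i := by ring
  have n1 : i + 2 ≠ i := by simpa using h2
  have n2 : i - 1 ≠ i + 1 := by
    intro h
    apply h2
    linear_combination -h
  unfold bracket
  rw [fderiv_vfield, fderiv_vfield]
  simp only [vfield, e1, e2, Pi.single_eq_same, Pi.single_eq_of_ne n1, Pi.single_eq_of_ne n2,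
    zero_sub, sub_zero, Pi.single_neg]

lemma fderiv_polyArea {n : ℕ} [NeZero n] (z w : ZMod n → ℝ × ℝ) :
    fderiv ℝ polyArea z w = (1 / 2) * ∑ i : ZMod n, det2 (w i) (z (i + 1) - z (i - 1)) := by
  have hp : ∀ i : ZMod n, HasFDerivAt (fun z : ZMod n → ℝ × ℝ => z i)
      (ContinuousLinearMap.proj (R := ℝ) (φ := fun _ : ZMod n => ℝ × ℝ) i) z := fun i =>
    (ContinuousLinearMap.proj (R := ℝ) (φ := fun _ : ZMod n => ℝ × ℝ) i).hasFDerivAt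
  have h : HasFDerivAt (polyArea (n := n)) _ z :=
    (HasFDerivAt.fun_sum (u := Finset.univ) (fun i _ =>
      ((hp i).fst.mul (hp (i + 1)).snd).sub ((hp i).snd.mul (hp (i + 1)).fst))).const_mul (1 / 2)
  rw [h.fderiv]
  have key : ∑ i : ZMod n, det2 (z i) (w (i + 1)) = ∑ i : ZMod n, det2 (z (i - 1)) (w i) := by
    rw [← Equiv.sum_comp (Equiv.addRight (1 : ZMod n)) (fun i => det2 (z (i - 1)) (w i))]
    simp
  have e : ∑ i : ZMod n, det2 (w i) (z (i + 1) - z (i - 1)) =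
      ∑ i : ZMod n, det2 (w i) (z (i + 1)) + ∑ i : ZMod n, det2 (z i) (w (i + 1)) := by
    rw [key, ← Finset.sum_add_distrib]
    refine Finset.sum_congr rfl fun i _ => ?_
    simp [det2]; ring
  rw [e, ← Finset.sum_add_distrib]
  simp only [smul_apply, sum_apply, smul_eq_mul]
  congr 1
  refine Finset.sum_congr rfl fun i _ => ?_
  simp [det2]; ring

lemma det2_parallel (u d : ℝ × ℝ) (hd : d ≠ 0) (h : det2 u d = 0) : ∃ c : ℝ, u = c • d := by
  unfold det2 at h
  by_cases h1 : d.1 = 0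
  · have h2 : d.2 ≠ 0 := fun h2 => hd (Prod.ext h1 h2)
    refine ⟨u.2 / d.2, Prod.ext ?_ ?_⟩
    · have : u.1 * d.2 = 0 := by rw [h1] at h; linarith
      simp [h1, (mul_eq_zero.mp this).resolve_right h2]
    · simp [h2]
  · refine ⟨u.1 / d.1, Prod.ext ?_ ?_⟩
    · simp [h1]
    · simp only [Prod.smul_snd, smul_eq_mul]
      field_simp
      linarith

lemma sum_det2_single {n : ℕ} [NeZero n] (d : ZMod n → ℝ × ℝ) (i : ZMod n) (u : ℝ × ℝ) :
    ∑ j : ZMod n, det2 ((Pi.single i u : ZMod n → ℝ × ℝ) j) (d j) = det2 u (d i) := by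
  rw [Finset.sum_eq_single i]
  · simp
  · intro j _ hj
    simp [Pi.single_eq_of_ne hj, det2]
  · simp

/-- For `n ≥ 3` and an `n`-gon `z` with
`det(zᵢ₊₁ − zᵢ₋₁, zᵢ₊₂ − zᵢ) ≠ 0` for all `i`, the span of the vectors `vᵢ(z)` together with
the first commutators `[vᵢ,vᵢ₊₁](z)` equals the kernel of `dA_z`, a hyperplane of dimension
`2n − 1`. -/
theorem stmt_10 (n : ℕ) [NeZero n] (hn : 3 ≤ n) (z : ZMod n → ℝ × ℝ)
    (hz : ∀ i, det2 (z (i + 1) - z (i - 1)) (z (i + 2) - z i) ≠ 0) :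
    Submodule.span ℝ
        ((Set.range fun i => vfield i z) ∪
          (Set.range fun i : ZMod n => bracket (vfield i) (vfield (i + 1)) z))
      = LinearMap.ker (fderiv ℝ polyArea z).toLinearMap ∧
    Module.finrank ℝ (LinearMap.ker (fderiv ℝ polyArea z).toLinearMap) = 2 * n - 1 := by
  set d : ZMod n → ℝ × ℝ := fun i => z (i + 1) - z (i - 1) with hd
  have hd1 : ∀ i, z (i + 2) - z i = d (i + 1) := by
    intro i
    have e1 : i + 1 + 1 = i + 2 := by ring
    have e2 : i + 1 - 1 = i := by ring
    simp only [hd, e1, e2]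
  have hδ : ∀ i, det2 (d i) (d (i + 1)) ≠ 0 := by
    intro i
    rw [← hd1]
    exact hz i
  have hd0 : ∀ i, d i ≠ 0 := by
    intro i h
    apply hδ i
    simp [h, det2]
  have hbr : ∀ i, bracket (vfield i) (vfield (i + 1)) z =
      - Pi.single (i + 1) (d i) - Pi.single i (d (i + 1)) := by
    intro i
    rw [bracket_eq hn, hd1]
  have hker : ∀ w, w ∈ LinearMap.ker (fderiv ℝ polyArea z).toLinearMap ↔
      ∑ i : ZMod n, det2 (w i) (d i) = 0 := by
    intro w
    rw [LinearMap.mem_ker, ContinuousLinearMap.coe_coe, fderiv_polyArea]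
    simp [hd]
  have hprev : ∀ i, det2 (d (i - 1)) (d i) ≠ 0 := by
    intro i
    have := hδ (i - 1)
    rwa [sub_add_cancel] at this
  refine ⟨?_, ?_⟩
  · set W := Submodule.span ℝ
        ((Set.range fun i => vfield i z) ∪
          (Set.range fun i : ZMod n => bracket (vfield i) (vfield (i + 1)) z)) with hW
    have hv : ∀ i, (Pi.single i (d i) : ZMod n → ℝ × ℝ) ∈ W := fun i =>
      Submodule.subset_span (Or.inl ⟨i, rfl⟩)
    have hb : ∀ i, (- Pi.single (i + 1) (d i) - Pi.single i (d (i + 1)) : ZMod n → ℝ × ℝ) ∈ W :=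
      fun i => Submodule.subset_span (Or.inr ⟨i, hbr i⟩)
    apply le_antisymm
    · rw [hW, Submodule.span_le]
      rintro w (⟨i, rfl⟩ | ⟨i, rfl⟩)
      · rw [SetLike.mem_coe, hker]
        refine (sum_det2_single d i (d i)).trans ?_
        simp [det2]; ring
      · rw [SetLike.mem_coe]
        dsimp only
        rw [hbr, hker]
        have h1 := sum_det2_single d (i + 1) (d i)
        have h2 := sum_det2_single d i (d (i + 1))
        have h3 : det2 (d i) (d (i + 1)) + det2 (d (i + 1)) (d i) = 0 := by
          unfold det2; ring
        rw [← h1, ← h2, ← Finset.sum_add_distrib] at h3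
        rw [← neg_eq_zero, ← Finset.sum_neg_distrib, ← h3]
        refine Finset.sum_congr rfl fun j _ => ?_
        simp only [det2, Pi.sub_apply, Pi.neg_apply, Prod.fst_sub, Prod.snd_sub, Prod.fst_neg,
          Prod.snd_neg]
        ring
    · have hpar : ∀ i u, det2 u (d i) = 0 → (Pi.single i u : ZMod n → ℝ × ℝ) ∈ W := by
        intro i u h
        obtain ⟨c, rfl⟩ := det2_parallel u (d i) (hd0 i) h
        rw [Pi.single_smul]
        exact W.smul_mem c (hv i)
      let e : ZMod n → ℝ × ℝ := fun i => (det2 (d (i - 1)) (d i))⁻¹ • d (i - 1)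
      have he : ∀ i, det2 (e i) (d i) = 1 := by
        intro i
        have h : det2 (e i) (d i) = (det2 (d (i - 1)) (d i))⁻¹ * det2 (d (i - 1)) (d i) := by
          simp only [e, det2, Prod.smul_fst, Prod.smul_snd, smul_eq_mul]; ring
        rw [h, inv_mul_cancel₀ (hprev i)]
      have hstep : ∀ i, (Pi.single (i + 1) (e (i + 1)) - Pi.single i (e i) :
          ZMod n → ℝ × ℝ) ∈ W := by
        intro i
        have h1 := W.smul_mem (-(det2 (d i) (d (i + 1)))⁻¹) (hb i)
        have h2 := hpar i ((det2 (d i) (d (i + 1)))⁻¹ • d (i + 1) + e i) (by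
          have h : det2 ((det2 (d i) (d (i + 1)))⁻¹ • d (i + 1) + e i) (d i) =
              det2 (e i) (d i) - (det2 (d i) (d (i + 1)))⁻¹ * det2 (d i) (d (i + 1)) := by
            simp only [det2, Prod.smul_fst, Prod.smul_snd, smul_eq_mul, Prod.fst_add,
              Prod.snd_add]
            ring
          rw [h, he, inv_mul_cancel₀ (hδ i), sub_self])
        have h3 := W.sub_mem h1 h2
        convert h3 using 1
        have e' : e (i + 1) = (det2 (d i) (d (i + 1)))⁻¹ • d i := by
          simp only [e, add_sub_cancel_right]
        have hs : ∀ (j : ZMod n) (c : ℝ) (x : ℝ × ℝ),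
            (Pi.single j (c • x) : ZMod n → ℝ × ℝ) = c • (Pi.single j x : ZMod n → ℝ × ℝ) := by
          intro j c x
          funext k
          by_cases hk : k = j
          · subst hk; simp
          · simp [Pi.single_eq_of_ne hk]
        rw [e', Pi.single_add, hs (i + 1) _ (d i), hs i _ (d (i + 1))]
        module
      have hnat : ∀ k : ℕ, (Pi.single (k : ZMod n) (e k) - Pi.single 0 (e 0) :
          ZMod n → ℝ × ℝ) ∈ W := by
        intro k
        induction k with
        | zero => simp
        | succ k ih =>
          have := W.add_mem (hstep k) ih
          rw [sub_add_sub_cancel] at this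
          push_cast
          exact this
      have hall : ∀ i : ZMod n, (Pi.single i (e i) - Pi.single 0 (e 0) :
          ZMod n → ℝ × ℝ) ∈ W := by
        intro i
        have := hnat i.val
        rwa [ZMod.natCast_zmod_val] at this
      intro w hw
      rw [hker] at hw
      have hdec : w = ∑ i : ZMod n, ((Pi.single i (w i - det2 (w i) (d i) • e i) :
          ZMod n → ℝ × ℝ) + det2 (w i) (d i) • (Pi.single i (e i) - Pi.single 0 (e 0))) := by
        have h1 : ∀ i : ZMod n, ((Pi.single i (w i - det2 (w i) (d i) • e i) :
          ZMod n → ℝ × ℝ) + det2 (w i) (d i) • (Pi.single i (e i) - Pi.single 0 (e 0))) =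
            (Pi.single i (w i) : ZMod n → ℝ × ℝ) -
              det2 (w i) (d i) • (Pi.single 0 (e 0) : ZMod n → ℝ × ℝ) := by
          intro i
          rw [Pi.single_sub, Pi.single_smul]
          module
        simp_rw [h1]
        rw [Finset.sum_sub_distrib, ← Finset.sum_smul, hw, zero_smul, sub_zero,
          Finset.univ_sum_single]
      rw [hdec]
      refine W.sum_mem fun i _ => W.add_mem (hpar i _ ?_) (W.smul_mem _ (hall i))
      have h : det2 (w i - det2 (w i) (d i) • e i) (d i) =
          det2 (w i) (d i) - det2 (w i) (d i) * det2 (e i) (d i) := by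
        simp only [det2, Prod.smul_fst, Prod.smul_snd, smul_eq_mul, Prod.fst_sub, Prod.snd_sub]
        ring
      rw [h, he, mul_one, sub_self]
  · have hne : (fderiv ℝ polyArea z).toLinearMap ≠ 0 := by
      intro h0
      have : (Pi.single 0 (d (0 - 1)) : ZMod n → ℝ × ℝ) ∈
          LinearMap.ker (fderiv ℝ polyArea z).toLinearMap := by
        rw [h0]; simp
      rw [hker, sum_det2_single] at this
      exact hprev 0 this
    have h := Module.Dual.finrank_ker_add_one_of_ne_zero (f := (fderiv ℝ polyArea z).toLinearMap) hne
    have h2 : Module.finrank ℝ (ZMod n → ℝ × ℝ) = 2 * n := by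
      rw [Module.finrank_pi_fintype]
      simp [ZMod.card, mul_comm]
    rw [h2] at h
    exact Nat.eq_sub_of_add_eq h
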